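/- Let K be a field containing an element ζ with ζ⁴ = −1. Then the group ring K[P] contains a unit that is not a trivial unit. -/

import Mathlib

noncomputable section

/-- The two relators of the Promislow group `P = ⟨a, b | b⁻¹a²b = a⁻², a⁻¹b²a = b⁻²⟩`,
written as words that equal the identity: `b⁻¹a²ba²` and `a⁻¹b²ab²`. -/
def Prels : Set (FreeGroup (Fin 2)) :=
  {(FreeGroup.of 1)⁻¹ * (FreeGroup.of 0) ^ 2 * (FreeGroup.of 1) * (FreeGroup.of 0) ^ 2,
   (FreeGroup.of 0)⁻¹ * (FreeGroup.of 1) ^ 2 * (FreeGroup.of 0) * (FreeGroup.of 1) ^ 2}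

/-- The Promislow group. -/
abbrev P : Type := PresentedGroup Prels

def pa : P := PresentedGroup.of 0
def pb : P := PresentedGroup.of 1
def px : P := pa ^ 2
def py : P := pb ^ 2
def pz : P := (pa * pb) ^ 2

universe u

/-- Commuting elements of a ring lie in the injective image of a commutative ring. -/
theorem exists_comm_model {R : Type u} [Ring R] (s : Set R)
    (h : ∀ x ∈ s, ∀ y ∈ s, x * y = y * x) :
    ∃ (S : Type u) (_ : CommRing S) (f : S →+* R), Function.Injective f ∧
      ∀ r ∈ s, ∃ t : S, f t = r := by
  have hc := Subring.isMulCommutative_closure (s := s) h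
  let inst : CommRing (Subring.closure s) :=
    { (inferInstance : Ring (Subring.closure s)) with mul_comm := fun u v => hc.is_comm.comm u v }
  refine ⟨Subring.closure s, inst, (Subring.closure s).subtype,
    Subtype.val_injective, ?_⟩
  intro r hr
  exact ⟨⟨r, Subring.subset_closure hr⟩, rfl⟩

/-- the group theory of the Promislow relations -/
theorem promislow_group {G : Type*} [Group G] (a b : G)
    (h1 : b⁻¹ * a ^ 2 * b * a ^ 2 = 1) (h2 : a⁻¹ * b ^ 2 * a * b ^ 2 = 1) :
    b * a ^ 2 = (a ^ 2)⁻¹ * b ∧ a * b ^ 2 = (b ^ 2)⁻¹ * a ∧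
    a * (a * b) ^ 2 = ((a * b) ^ 2)⁻¹ * a ∧ b * (a * b) ^ 2 = ((a * b) ^ 2)⁻¹ * b ∧
    b * a = (a ^ 2)⁻¹ * b ^ 2 * ((a * b) ^ 2)⁻¹ * (a * b) := by
  have e1 : a ^ 2 * b = b * (a ^ 2)⁻¹ := by
    have : b⁻¹ * (a ^ 2 * b) * a ^ 2 = 1 := by simpa [mul_assoc] using h1
    have := eq_inv_of_mul_eq_one_left this
    rw [← this]; group
  have e2 : b ^ 2 * a = a * (b ^ 2)⁻¹ := by
    have : a⁻¹ * (b ^ 2 * a) * b ^ 2 = 1 := by simpa [mul_assoc] using h2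
    have := eq_inv_of_mul_eq_one_left this
    rw [← this]; group
  have f1 : b * a ^ 2 = (a ^ 2)⁻¹ * b := by
    rw [eq_inv_mul_iff_mul_eq, ← mul_assoc, e1]; group
  have f2 : a * b ^ 2 = (b ^ 2)⁻¹ * a := by
    rw [eq_inv_mul_iff_mul_eq, ← mul_assoc, e2]; group
  refine ⟨f1, f2, ?_, ?_, ?_⟩
  · rw [eq_inv_mul_iff_mul_eq]
    calc (a * b) ^ 2 * (a * (a * b) ^ 2) = a * b * a * (b * a ^ 2) * b * a * b := by
          simp only [pow_two, mul_assoc]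
      _ = a * b * a⁻¹ * b ^ 2 * a * b := by rw [f1]; simp [pow_two, mul_assoc]
      _ = a * b * a⁻¹ * (b ^ 2 * a) * b := by group
      _ = a := by rw [e2]; group
  · rw [eq_inv_mul_iff_mul_eq]
    calc (a * b) ^ 2 * (b * (a * b) ^ 2) = a * b * (a * b ^ 2) * a * b * a * b := by
          simp only [pow_two, mul_assoc]
      _ = a * b⁻¹ * a ^ 2 * b * a * b := by rw [f2]; simp [pow_two, mul_assoc]
      _ = a * b⁻¹ * (a ^ 2 * b) * a * b := by group
      _ = b := by rw [e1]; group
  · symm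
    calc (a ^ 2)⁻¹ * b ^ 2 * ((a * b) ^ 2)⁻¹ * (a * b) = (a ^ 2)⁻¹ * b * a⁻¹ := by
          simp [pow_two, mul_assoc]
      _ = b * a := by rw [← f1]; group

/-- The data of the images of the Promislow generators in a ring. -/
structure PRel {R : Type u} [Ring R] (a b x xi y yi z zi : R) : Prop where
  xx : x * xi = 1
  xx' : xi * x = 1
  yy : y * yi = 1
  yy' : yi * y = 1
  zz : z * zi = 1
  zz' : zi * z = 1
  aa : a * a = x
  bb : b * b = y
  cc : a * b * (a * b) = z
  bx : b * x = xi * b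
  bxi : b * xi = x * b
  ay : a * y = yi * a
  ayi : a * yi = y * a
  az : a * z = zi * a
  azi : a * zi = z * a
  bz : b * z = zi * b
  bzi : b * zi = z * b
  ba : b * a = xi * y * zi * (a * b)

theorem PRel.of_group {G : Type*} [Group G] {R : Type u} [Ring R] (f : G →* R) (a b : G)
    (h1 : b⁻¹ * a ^ 2 * b * a ^ 2 = 1) (h2 : a⁻¹ * b ^ 2 * a * b ^ 2 = 1) :
    PRel (f a) (f b) (f (a ^ 2)) (f (a ^ 2)⁻¹) (f (b ^ 2)) (f (b ^ 2)⁻¹)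
      (f ((a * b) ^ 2)) (f ((a * b) ^ 2)⁻¹) := by
  obtain ⟨e1, e2, e3, e4, e5⟩ := promislow_group a b h1 h2
  have key : ∀ u v : G, u * v = v⁻¹ * u → u * v⁻¹ = v * u := by
    intro u v h
    rw [mul_inv_eq_iff_eq_mul, mul_assoc, h, mul_inv_cancel_left]
  constructor <;> simp only [← map_mul, mul_inv_cancel, inv_mul_cancel, map_one]
  · rw [pow_two]
  · rw [pow_two]
  · rw [pow_two]
  · rw [e1]
  · rw [key _ _ e1]
  · rw [e2]
  · rw [key _ _ e2]
  · rw [e3]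
  · rw [key _ _ e3]
  · rw [e4]
  · rw [key _ _ e4]
  · rw [← e5]

/-- coefficient of `ab` in `m0` -/
def cE {R : Type u} [Ring R] (xi yi zi : R) : R := (1 + xi) * (1 + yi) * (1 + zi)
/-- coefficient of `a` in `m1` -/
def cQ {R : Type u} [Ring R] (xi yi zi : R) : R :=
  zi * (xi * yi * yi + 1) + (yi + xi * yi) * zi * zi + (1 + 1) * (xi * yi + yi) * zi
/-- coefficient of `-b` in `m1` -/
def cR {R : Type u} [Ring R] (x xi yi zi : R) : R :=
  zi * (xi * yi + x) + (1 + yi) + (1 + 1) * (yi + 1) * zi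
def cX {R : Type u} [Ring R] (x xi y yi : R) : R :=
  x + xi + (1 + 1) + (y + yi + (1 + 1))
def cN {R : Type u} [Ring R] (z zi : R) : R := 1 + 1 - z - zi

section semiconj
variable {R : Type u} [Ring R] {u x xi y yi z zi x' xi' y' yi' z' zi' : R}

theorem semi_cE (h1 : SemiconjBy u xi xi') (h2 : SemiconjBy u yi yi') (h3 : SemiconjBy u zi zi') :
    SemiconjBy u (cE xi yi zi) (cE xi' yi' zi') :=
  have o := SemiconjBy.one_right u
  ((o.add_right h1).mul_right (o.add_right h2)).mul_right (o.add_right h3)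

theorem semi_cQ (h1 : SemiconjBy u xi xi') (h2 : SemiconjBy u yi yi') (h3 : SemiconjBy u zi zi') :
    SemiconjBy u (cQ xi yi zi) (cQ xi' yi' zi') :=
  have o := SemiconjBy.one_right u
  ((h3.mul_right (((h1.mul_right h2).mul_right h2).add_right o)).add_right
    (((h2.add_right (h1.mul_right h2)).mul_right h3).mul_right h3)).add_right
    (((o.add_right o).mul_right ((h1.mul_right h2).add_right h2)).mul_right h3)

theorem semi_cR (h0 : SemiconjBy u x x') (h1 : SemiconjBy u xi xi') (h2 : SemiconjBy u yi yi')
    (h3 : SemiconjBy u zi zi') :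
    SemiconjBy u (cR x xi yi zi) (cR x' xi' yi' zi') :=
  have o := SemiconjBy.one_right u
  ((h3.mul_right ((h1.mul_right h2).add_right h0)).add_right (o.add_right h2)).add_right
    (((o.add_right o).mul_right (h2.add_right o)).mul_right h3)

theorem semi_cX (h0 : SemiconjBy u x x') (h1 : SemiconjBy u xi xi') (h2 : SemiconjBy u y y')
    (h3 : SemiconjBy u yi yi') :
    SemiconjBy u (cX x xi y yi) (cX x' xi' y' yi') :=
  have o := SemiconjBy.one_right u
  ((h0.add_right h1).add_right (o.add_right o)).add_right
    ((h2.add_right h3).add_right (o.add_right o))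

theorem semi_cN (h0 : SemiconjBy u z z') (h1 : SemiconjBy u zi zi') :
    SemiconjBy u (cN z zi) (cN z' zi') :=
  have o := SemiconjBy.one_right u
  ((o.add_right o).sub_right h0).sub_right h1

end semiconj

def m0 {R : Type u} [Ring R] (a b x xi y yi zi : R) : R :=
  cE xi yi zi * (a * b) - cX x xi y yi
def m1 {R : Type u} [Ring R] (a b x xi yi zi : R) : R :=
  cQ xi yi zi * a - cR x xi yi zi * b

theorem PRel.main {R : Type u} [Ring R] {a b x xi y yi z zi : R}
    (h : PRel a b x xi y yi z zi) :
    m0 a b x xi y yi zi * z = z * m0 a b x xi y yi zi ∧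
    m1 a b x xi yi zi * z = zi * m1 a b x xi yi zi ∧
    m1 a b x xi yi zi * zi = z * m1 a b x xi yi zi ∧
    m1 a b x xi yi zi * m0 a b x xi y yi zi = m0 a b x xi y yi zi * m1 a b x xi yi zi ∧
    m1 a b x xi yi zi * m1 a b x xi yi zi =
      m0 a b x xi y yi zi * (m0 a b x xi y yi zi + cN z zi) := by
  have sInv : ∀ {u v vi : R}, v * vi = 1 → vi * v = 1 → u * v = v * u → u * vi = vi * u := by
    intro u v vi e1 e2 e3
    calc u * vi = vi * v * u * vi := by rw [e2, one_mul]
      _ = vi * (u * v) * vi := by rw [e3]; simp only [mul_assoc]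
      _ = vi * u := by rw [mul_assoc, mul_assoc u, e1, mul_one]
  have ax : SemiconjBy a x x := by
    change a * x = x * a
    rw [← h.aa, mul_assoc]
  have axi : SemiconjBy a xi xi := sInv h.xx h.xx' ax
  have bY : SemiconjBy b y y := by
    change b * y = y * b
    rw [← h.bb, mul_assoc]
  have bYi : SemiconjBy b yi yi := sInv h.yy h.yy' bY
  have ay : SemiconjBy a y yi := h.ay
  have ayi : SemiconjBy a yi y := h.ayi
  have az : SemiconjBy a z zi := h.az
  have azi : SemiconjBy a zi z := h.azi
  have bx : SemiconjBy b x xi := h.bx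
  have bxi : SemiconjBy b xi x := h.bxi
  have bz : SemiconjBy b z zi := h.bz
  have bzi : SemiconjBy b zi z := h.bzi
  have cx : SemiconjBy (a * b) x xi := axi.mul_left bx
  have cxi : SemiconjBy (a * b) xi x := ax.mul_left bxi
  have cy : SemiconjBy (a * b) y yi := ay.mul_left bY
  have cyi : SemiconjBy (a * b) yi y := ayi.mul_left bYi
  have cz : SemiconjBy (a * b) z z := azi.mul_left bz
  have czi : SemiconjBy (a * b) zi zi := az.mul_left bzi
  have yx : y * x = x * y := by
    have : SemiconjBy (b * b) x x := bxi.mul_left bx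
    rwa [h.bb] at this
  have zx : z * x = x * z := by
    have : SemiconjBy (a * b * (a * b)) x x := cxi.mul_left cx
    rwa [h.cc] at this
  have zy : z * y = y * z := by
    have : SemiconjBy (a * b * (a * b)) y y := cyi.mul_left cy
    rwa [h.cc] at this
  have yxi := sInv h.xx h.xx' yx
  have zxi := sInv h.xx h.xx' zx
  have zyi := sInv h.yy h.yy' zy
  have xyi := sInv h.yy h.yy' yx.symm
  have xzi := sInv h.zz h.zz' zx.symm
  have yzi := sInv h.zz h.zz' zy.symm
  have xiyi := sInv h.yy h.yy' yxi.symm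
  have xizi := sInv h.zz h.zz' zxi.symm
  have yizi := sInv h.zz h.zz' zyi.symm
  have xxi := h.xx.trans h.xx'.symm
  have yyi := h.yy.trans h.yy'.symm
  have zzi := h.zz.trans h.zz'.symm
  obtain ⟨S, _, f, hf, hS⟩ := exists_comm_model ({x, xi, y, yi, z, zi} : Set R) (by
    intro u hu v hv
    simp only [Set.mem_insert_iff, Set.mem_singleton_iff] at hu hv
    rcases hu with rfl | rfl | rfl | rfl | rfl | rfl <;>
    rcases hv with rfl | rfl | rfl | rfl | rfl | rfl <;>
    first | rfl | assumption | (symm; assumption))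
  obtain ⟨x, rfl⟩ := hS x (by simp)
  obtain ⟨xi, rfl⟩ := hS xi (by simp)
  obtain ⟨y, rfl⟩ := hS y (by simp)
  obtain ⟨yi, rfl⟩ := hS yi (by simp)
  obtain ⟨z, rfl⟩ := hS z (by simp)
  obtain ⟨zi, rfl⟩ := hS zi (by simp)
  have hx : x * xi = 1 := hf (by simpa using h.xx)
  have hy : y * yi = 1 := hf (by simpa using h.yy)
  have hz : z * zi = 1 := hf (by simpa using h.zz)
  have one' : ∀ u : R, SemiconjBy u 1 1 := SemiconjBy.one_right
  have fE' : ∀ p q r : S, cE (f p) (f q) (f r) = f (cE p q r) := by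
    intros; simp only [cE, map_mul, map_add, map_one]
  have fQ' : ∀ p q r : S, cQ (f p) (f q) (f r) = f (cQ p q r) := by
    intros; simp only [cQ, map_mul, map_add, map_one]
  have fR' : ∀ p q r s : S, cR (f p) (f q) (f r) (f s) = f (cR p q r s) := by
    intros; simp only [cR, map_mul, map_add, map_one]
  have fX' : ∀ p q r s : S, cX (f p) (f q) (f r) (f s) = f (cX p q r s) := by
    intros; simp only [cX, map_add, map_one]
  have fN' : ∀ p q : S, cN (f p) (f q) = f (cN p q) := by
    intros; simp only [cN, map_add, map_sub, map_one]
  have aE : a * f (cE xi yi zi) = f (cE xi y z) * a := by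
    have := semi_cE axi ayi azi
    simp only [fE'] at this
    exact this
  have bE : b * f (cE xi yi zi) = f (cE x yi z) * b := by
    have := semi_cE bxi bYi bzi
    simp only [fE'] at this
    exact this
  have cE' : (a * b) * f (cE xi yi zi) = f (cE x y zi) * (a * b) := by
    have := semi_cE cxi cyi czi
    simp only [fE'] at this
    exact this
  have aQ : a * f (cQ xi yi zi) = f (cQ xi y z) * a := by
    have := semi_cQ axi ayi azi
    simp only [fQ'] at this
    exact this
  have bQ : b * f (cQ xi yi zi) = f (cQ x yi z) * b := by
    have := semi_cQ bxi bYi bzi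
    simp only [fQ'] at this
    exact this
  have cQ' : (a * b) * f (cQ xi yi zi) = f (cQ x y zi) * (a * b) := by
    have := semi_cQ cxi cyi czi
    simp only [fQ'] at this
    exact this
  have aR : a * f (cR x xi yi zi) = f (cR x xi y z) * a := by
    have := semi_cR ax axi ayi azi
    simp only [fR'] at this
    exact this
  have bR : b * f (cR x xi yi zi) = f (cR xi x yi z) * b := by
    have := semi_cR bx bxi bYi bzi
    simp only [fR'] at this
    exact this
  have cR' : (a * b) * f (cR x xi yi zi) = f (cR xi x y zi) * (a * b) := by
    have := semi_cR cx cxi cyi czi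
    simp only [fR'] at this
    exact this
  have aX : a * f (cX x xi y yi) = f (cX x xi yi y) * a := by
    have := semi_cX ax axi ay ayi
    simp only [fX'] at this
    exact this
  have bX : b * f (cX x xi y yi) = f (cX xi x y yi) * b := by
    have := semi_cX bx bxi bY bYi
    simp only [fX'] at this
    exact this
  have cX' : (a * b) * f (cX x xi y yi) = f (cX xi x yi y) * (a * b) := by
    have := semi_cX cx cxi cy cyi
    simp only [fX'] at this
    exact this
  have X1 : cX x xi yi y = cX x xi y yi := by simp only [cX]; ring
  have X2 : cX xi x y yi = cX x xi y yi := by simp only [cX]; ring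
  have X3 : cX xi x yi y = cX x xi y yi := by simp only [cX]; ring
  rw [X1] at aX
  rw [X2] at bX
  rw [X3] at cX'
  have cN' : (a * b) * f (cN z zi) = f (cN z zi) * (a * b) := by
    have := semi_cN cz czi
    simp only [fN'] at this
    exact this
  have tac : a * (a * b) = f x * b := by rw [← mul_assoc, h.aa]
  have tcb : a * b * b = f yi * a := by
    rw [mul_assoc, h.bb, h.ay]
  have tbc : b * (a * b) = f (xi * zi) * a := by
    have e : f xi * f y * f zi = f (xi * zi * y) := by
      rw [← map_mul, ← map_mul]; congr 1; ring
    rw [← mul_assoc, h.ba, mul_assoc, tcb, e, ← mul_assoc, ← map_mul, mul_assoc _ y, hy, mul_one]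
  have tca : a * b * a = f (yi * z) * b := by
    have e : a * (f xi * f y * f zi) = f (xi * yi * z) * a := by
      simp only [map_mul]
      exact (axi.mul_right ay).mul_right azi
    have e' : xi * yi * z * x = yi * z := by linear_combination yi * z * hx
    rw [mul_assoc, h.ba, ← mul_assoc, e, mul_assoc, tac, ← mul_assoc, ← map_mul, e']
  have mulL : ∀ (u v w : R) (p q q' r : S), u * f q = f q' * u → u * v = f r * w →
      f p * u * (f q * v) = f (p * q' * r) * w := by
    intro u v w p q q' r e1 e2
    rw [map_mul, map_mul, mul_assoc, ← mul_assoc u, e1, mul_assoc (f q'), e2]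
    simp only [mul_assoc]
  have mulC : ∀ (u : R) (p q q' : S), u * f q = f q' * u →
      f p * u * f q = f (p * q') * u := by
    intro u p q q' e1
    rw [map_mul, mul_assoc, e1]
    simp only [mul_assoc]
  have mulA : ∀ (u : R) (p q : S), f p * (f q * u) = f (p * q) * u := by
    intro u p q
    rw [map_mul, mul_assoc]
  have i1 : cQ xi yi zi * cE xi y z * x = cE xi yi zi * cQ x y zi * (yi * z) := by
    simp only [cQ, cE]; grind
  have i2 : cR x xi yi zi * cE x yi z * (xi * zi) = cE xi yi zi * cR xi x y zi * yi := by
    simp only [cR, cE]; grind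
  have i3 : cQ xi yi zi * cQ xi y z * x + cR x xi yi zi * cR xi x yi z * y =
      cE xi yi zi * cE x y zi * z + cX x xi y yi * (cX x xi y yi - cN z zi) := by
    simp only [cQ, cR, cE, cX, cN]; grind
  have i4 : cQ xi yi zi * cR x xi y z * 1 + cR x xi yi zi * cQ x yi z * (xi * y * zi) =
      cE xi yi zi * (2 * cX x xi y yi - cN z zi) := by
    simp only [cQ, cR, cE, cX, cN]; grind
  have taa : a * a = f x * 1 := by rw [h.aa, mul_one]
  have tbb : b * b = f y * 1 := by rw [h.bb, mul_one]
  have tcc : a * b * (a * b) = f z * 1 := by rw [h.cc, mul_one]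
  have tab : a * b = f 1 * (a * b) := by rw [map_one, one_mul]
  have tba : b * a = f (xi * y * zi) * (a * b) := by rw [h.ba, map_mul, map_mul]
  simp only [m0, m1, fE', fQ', fR', fX', fN']
  refine ⟨?_, ?_, ?_, ?_, ?_⟩
  · rw [sub_mul, mul_sub, mulC _ _ _ _ cz, mulA, ← map_mul, ← map_mul, mul_comm z, mul_comm z]
  · rw [sub_mul, mul_sub, mulC _ _ _ _ az, mulC _ _ _ _ bz, mulA, mulA, mul_comm zi, mul_comm zi]
  · rw [sub_mul, mul_sub, mulC _ _ _ _ azi, mulC _ _ _ _ bzi, mulA, mulA, mul_comm z, mul_comm z]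
  · rw [sub_mul, mul_sub, mul_sub, sub_mul, mul_sub, mul_sub, mulL _ _ _ _ _ _ _ aE tac,
      mulL _ _ _ _ _ _ _ bE tbc, mulC _ _ _ _ aX, mulC _ _ _ _ bX, mulL _ _ _ _ _ _ _ cQ' tca,
      mulL _ _ _ _ _ _ _ cR' tcb, mulA, mulA, i1, i2, mul_comm (cX x xi y yi),
      mul_comm (cX x xi y yi)]
    abel
  · have L : (f (cQ xi yi zi) * a - f (cR x xi yi zi) * b) *
        (f (cQ xi yi zi) * a - f (cR x xi yi zi) * b) =
        f (cQ xi yi zi * cQ xi y z * x + cR x xi yi zi * cR xi x yi z * y) -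
        f (cQ xi yi zi * cR x xi y z * 1 + cR x xi yi zi * cQ x yi z * (xi * y * zi)) * (a * b) := by
      rw [sub_mul, mul_sub, mul_sub, mulL _ _ _ _ _ _ _ aQ taa, mulL _ _ _ _ _ _ _ aR tab,
        mulL _ _ _ _ _ _ _ bQ tba, mulL _ _ _ _ _ _ _ bR tbb]
      simp only [map_add, add_mul, mul_one]
      abel
    have L' : (f (cE xi yi zi) * (a * b) - f (cX x xi y yi)) *
        (f (cE xi yi zi) * (a * b) - f (cX x xi y yi) + f (cN z zi)) =
        f (cE xi yi zi * cE x y zi * z + cX x xi y yi * (cX x xi y yi - cN z zi)) -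
        f (cE xi yi zi * (2 * cX x xi y yi - cN z zi)) * (a * b) := by
      have e1 : cE xi yi zi * (2 * cX x xi y yi - cN z zi) =
        cE xi yi zi * cX x xi y yi + cX x xi y yi * cE xi yi zi - cE xi yi zi * cN z zi := by ring
      rw [mul_add, sub_mul, mul_sub, mul_sub, sub_mul, mulL _ _ _ _ _ _ _ cE' tcc,
        mulC _ _ _ _ cX', mulC _ _ _ _ cN', mulA, mul_one, ← map_mul, ← map_mul, e1,
        mul_sub (cX x xi y yi)]
      simp only [map_add, map_sub, add_mul, sub_mul]
      abel
    rw [L, L', i3, i4]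

theorem unit_of_model {R S : Type u} [Ring R] [CommRing S] (f : S →+* R) (m : R)
    (A A' B B' T : S) (h1 : m * f A = f A' * m) (h2 : m * f A' = f A * m)
    (h3 : m * f B = f B' * m) (h4 : m * m = f T) (h5 : A * A' - B * B' * T = 1) :
    (f A + f B * m) * (f A' - f B * m) = 1 ∧ (f A' - f B * m) * (f A + f B * m) = 1 := by
  have e : f B * m * (f B * m) = f (B * B' * T) := by
    rw [mul_assoc, ← mul_assoc m, h3, mul_assoc, h4, map_mul, map_mul, mul_assoc]
  have e1 : f B * m * f A' = f (A * B) * m := by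
    rw [mul_assoc, h2, mul_comm A, map_mul, mul_assoc]
  have e2 : f B * m * f A = f (A' * B) * m := by
    rw [mul_assoc, h1, mul_comm A', map_mul, mul_assoc]
  constructor
  · rw [add_mul, mul_sub, mul_sub, e, e1, ← mul_assoc, ← map_mul, ← map_mul,
      show (1 : R) = f 1 from (map_one f).symm, ← h5, map_sub]
    abel
  · rw [sub_mul, mul_add, mul_add, e, e2, ← mul_assoc, ← map_mul, ← map_mul,
      show (1 : R) = f 1 from (map_one f).symm, ← h5, map_sub, mul_comm A' A]
    abel

section units
variable {R : Type u} [Ring R]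

def ug (i z zi : R) : R :=
  1 + (1 + 1) * (z - zi) ^ 2 - i * (z - zi) ^ 3
def ur (i z zi : R) : R :=
  (1 + 1) * i * (z - zi) * (z + zi + (1 + 1))
def uq (z zi : R) : R :=
  (z + zi) * (z ^ 8 + z ^ 6 - z ^ 2 - 1 - zi ^ 2 + zi ^ 6 + zi ^ 8)
def uA (i z zi m : R) : R :=
  1 - zi ^ 15 * uq z zi * ur i z zi ^ 2 * (m * (m + cN z zi))
def uB (i z zi m : R) : R :=
  -(z ^ 15 * uq z zi * ur i z zi * (ug i z zi + ur i z zi * m))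

variable {u i z zi m i' z' zi' m' : R}

theorem semi_ug (h1 : SemiconjBy u i i') (h2 : SemiconjBy u z z') (h3 : SemiconjBy u zi zi') :
    SemiconjBy u (ug i z zi) (ug i' z' zi') :=
  have o := SemiconjBy.one_right u
  have t := h2.sub_right h3
  (o.add_right ((o.add_right o).mul_right (t.pow_right 2))).sub_right
    (h1.mul_right (t.pow_right 3))

theorem semi_ur (h1 : SemiconjBy u i i') (h2 : SemiconjBy u z z') (h3 : SemiconjBy u zi zi') :
    SemiconjBy u (ur i z zi) (ur i' z' zi') :=
  have o := SemiconjBy.one_right u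
  have t := h2.sub_right h3
  (((o.add_right o).mul_right h1).mul_right t).mul_right
    ((h2.add_right h3).add_right (o.add_right o))

theorem semi_uq (h2 : SemiconjBy u z z') (h3 : SemiconjBy u zi zi') :
    SemiconjBy u (uq z zi) (uq z' zi') :=
  have o := SemiconjBy.one_right u
  (h2.add_right h3).mul_right
    (((((((h2.pow_right 8).add_right (h2.pow_right 6)).sub_right (h2.pow_right 2)).sub_right
      o).sub_right (h3.pow_right 2)).add_right (h3.pow_right 6)).add_right (h3.pow_right 8))

theorem semi_uA (h1 : SemiconjBy u i i') (h2 : SemiconjBy u z z') (h3 : SemiconjBy u zi zi')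
    (h4 : SemiconjBy u m m') :
    SemiconjBy u (uA i z zi m) (uA i' z' zi' m') :=
  (SemiconjBy.one_right u).sub_right ((((h3.pow_right 15).mul_right (semi_uq h2 h3)).mul_right
    ((semi_ur h1 h2 h3).pow_right 2)).mul_right (h4.mul_right (h4.add_right (semi_cN h2 h3))))

theorem semi_uB (h1 : SemiconjBy u i i') (h2 : SemiconjBy u z z') (h3 : SemiconjBy u zi zi')
    (h4 : SemiconjBy u m m') :
    SemiconjBy u (uB i z zi m) (uB i' z' zi' m') :=
  ((((h2.pow_right 15).mul_right (semi_uq h2 h3)).mul_right (semi_ur h1 h2 h3)).mul_right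
    ((semi_ug h1 h2 h3).add_right ((semi_ur h1 h2 h3).mul_right h4))).neg_right

theorem map_uA {R' : Type*} [Ring R'] (f : R →+* R') :
    f (uA i z zi m) = uA (f i) (f z) (f zi) (f m) := by
  simp only [uA, uq, ur, cN, map_mul, map_add, map_sub, map_pow, map_one]

theorem map_uB {R' : Type*} [Ring R'] (f : R →+* R') :
    f (uB i z zi m) = uB (f i) (f z) (f zi) (f m) := by
  simp only [uB, uq, ur, ug, map_mul, map_add, map_sub, map_pow, map_one, map_neg]

end units

theorem uAB_identity {S : Type u} [CommRing S] (i z zi m : S) (hz : z * zi = 1)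
    (hi : i * i = -1) :
    uA i z zi m * uA i zi z m - uB i z zi m * uB i zi z m * (m * (m + cN z zi)) = 1 := by
  have eq : uq zi z = uq z zi := by simp only [uq]; ring
  have er : ur i zi z = - ur i z zi := by simp only [ur]; ring
  have eN : cN zi z = cN z zi := by simp only [cN]; ring
  have e1 : ug i z zi - ug i zi z = cN z zi * ur i z zi := by
    simp only [ug, ur, cN]
    linear_combination (8 * i * (z - zi)) * hz
  have e4 : ug i z zi * ug i zi z =
      (z ^ 2 - 1 + zi ^ 2) * (z ^ 4 - z ^ 2 + 1 - zi ^ 2 + zi ^ 4) := by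
    simp only [ug]; grind
  have e2 : uq z zi * (ug i z zi * ug i zi z) = z ^ 15 + zi ^ 15 := by
    rw [e4]; simp only [uq]; grind
  have e3 : z ^ 15 * zi ^ 15 = 1 := by rw [← mul_pow, hz, one_pow]
  simp only [uA, uB, eq, er, eN]
  generalize uq z zi = q at *
  generalize ur i z zi = r at *
  generalize ug i z zi = g at *
  generalize ug i zi z = g' at *
  generalize z ^ 15 = w at *
  generalize zi ^ 15 = v at *
  generalize cN z zi = N at *
  linear_combination (-(w * v * q ^ 2 * r ^ 3 * m * (m * (m + N)))) * e1 +
    q * r ^ 2 * (m * (m + N)) * w * v * e2 + q * r ^ 2 * (m * (m + N)) * (w + v) * e3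

theorem unit_general {R : Type u} [Ring R] (i z zi m n : R) (hi : i * i = -1)
    (iz : i * z = z * i) (izi : i * zi = zi * i) (im : i * m = m * i) (ni : n * i = i * n)
    (hz : z * zi = 1) (hz' : zi * z = 1) (mz : m * z = z * m) (nz : n * z = zi * n)
    (nzi : n * zi = z * n) (nm : n * m = m * n) (nn : n * n = m * (m + cN z zi)) :
    (uA i z zi m + uB i z zi m * n) * (uA i zi z m - uB i z zi m * n) = 1 ∧
    (uA i zi z m - uB i z zi m * n) * (uA i z zi m + uB i z zi m * n) = 1 := by
  have mzi : m * zi = zi * m := by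
    calc m * zi = zi * z * m * zi := by rw [hz', one_mul]
      _ = zi * (m * z) * zi := by rw [mz]; simp only [mul_assoc]
      _ = zi * m := by rw [mul_assoc, mul_assoc m, hz, mul_one]
  have zzi := hz.trans hz'.symm
  obtain ⟨S, _, f, hf, hS⟩ := exists_comm_model ({i, z, zi, m} : Set R) (by
    intro u hu v hv
    simp only [Set.mem_insert_iff, Set.mem_singleton_iff] at hu hv
    rcases hu with rfl | rfl | rfl | rfl <;>
    rcases hv with rfl | rfl | rfl | rfl <;>
    first | rfl | assumption | (symm; assumption))
  obtain ⟨i, rfl⟩ := hS i (by simp)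
  obtain ⟨z, rfl⟩ := hS z (by simp)
  obtain ⟨zi, rfl⟩ := hS zi (by simp)
  obtain ⟨m, rfl⟩ := hS m (by simp)
  have hz1 : z * zi = 1 := hf (by simpa using hz)
  have hi1 : i * i = -1 := hf (by simpa using hi)
  have fN : cN (f z) (f zi) = f (cN z zi) := by
    simp only [cN, map_add, map_sub, map_one]
  rw [fN, ← map_add, ← map_mul] at nn
  have key := unit_of_model f n (uA i z zi m) (uA i zi z m) (uB i z zi m) (uB i zi z m)
    (m * (m + cN z zi))
    (by rw [map_uA, map_uA]; exact semi_uA ni nz nzi nm)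
    (by rw [map_uA, map_uA]; exact semi_uA ni nzi nz nm)
    (by rw [map_uB, map_uB]; exact semi_uB ni nz nzi nm) nn (uAB_identity i z zi m hz1 hi1)
  simpa only [map_uA, map_uB] using key

theorem unit_char_two {R : Type u} [Ring R] (z zi m n : R) (h2 : (1 + 1 : R) = 0)
    (hz : z * zi = 1) (hz' : zi * z = 1) (mz : m * z = z * m) (nz : n * z = zi * n)
    (nzi : n * zi = z * n) (nm : n * m = m * n) (nn : n * n = m * (m + cN z zi)) :
    (1 + z * m + zi * n) * (1 + zi * m - zi * n) = 1 ∧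
    (1 + zi * m - zi * n) * (1 + z * m + zi * n) = 1 := by
  have mzi : m * zi = zi * m := by
    calc m * zi = zi * z * m * zi := by rw [hz', one_mul]
      _ = zi * (m * z) * zi := by rw [mz]; simp only [mul_assoc]
      _ = zi * m := by rw [mul_assoc, mul_assoc m, hz, mul_one]
  have zzi := hz.trans hz'.symm
  obtain ⟨S, _, f, hf, hS⟩ := exists_comm_model ({z, zi, m} : Set R) (by
    intro u hu v hv
    simp only [Set.mem_insert_iff, Set.mem_singleton_iff] at hu hv
    rcases hu with rfl | rfl | rfl <;>
    rcases hv with rfl | rfl | rfl <;>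
    first | rfl | assumption | (symm; assumption))
  obtain ⟨z, rfl⟩ := hS z (by simp)
  obtain ⟨zi, rfl⟩ := hS zi (by simp)
  obtain ⟨m, rfl⟩ := hS m (by simp)
  have hz1 : z * zi = 1 := hf (by simpa using hz)
  have h21 : (1 + 1 : S) = 0 := hf (by simpa only [map_add, map_one, map_zero] using h2)
  have fN : cN (f z) (f zi) = f (cN z zi) := by
    simp only [cN, map_add, map_sub, map_one]
  rw [fN, ← map_add, ← map_mul] at nn
  have o := SemiconjBy.one_right n
  have s1 : SemiconjBy n (f z) (f zi) := nz
  have s2 : SemiconjBy n (f zi) (f z) := nzi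
  have s3 : SemiconjBy n (f m) (f m) := nm
  have key := unit_of_model f n (1 + z * m) (1 + zi * m) zi z (m * (m + cN z zi))
    (by simp only [map_add, map_mul, map_one]; exact o.add_right (s1.mul_right s3))
    (by simp only [map_add, map_mul, map_one]; exact o.add_right (s2.mul_right s3))
    nzi nn (by
      simp only [cN]
      linear_combination (m ^ 2 - m * (m + (1 + 1 - z - zi))) * hz1 + (z + zi - 1) * m * h21)
  simpa only [map_add, map_mul, map_one] using key

/-- monomial `2 × 2` matrices -/
def IsMono {T : Type*} [CommRing T] (M : Matrix (Fin 2) (Fin 2) T) : Prop :=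
  (M 0 1 = 0 ∧ M 1 0 = 0) ∨ (M 0 0 = 0 ∧ M 1 1 = 0)

theorem IsMono.mul {T : Type*} [CommRing T] {M N : Matrix (Fin 2) (Fin 2) T}
    (hM : IsMono M) (hN : IsMono N) : IsMono (M * N) := by
  unfold IsMono at *
  simp only [Matrix.mul_apply, Fin.sum_univ_two]
  rcases hM with ⟨h1, h2⟩ | ⟨h1, h2⟩ <;> rcases hN with ⟨h3, h4⟩ | ⟨h3, h4⟩ <;>
    simp [h1, h2, h3, h4]

theorem exists_rep {K : Type u} [Field K] {T : Type u} [CommRing T] [Algebra K T]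
    (ua ub : (Matrix (Fin 2) (Fin 2) T)ˣ)
    (h1 : ub⁻¹ * ua ^ 2 * ub * ua ^ 2 = 1) (h2 : ua⁻¹ * ub ^ 2 * ua * ub ^ 2 = 1)
    (ma : IsMono (ua : Matrix (Fin 2) (Fin 2) T)) (mb : IsMono (ub : Matrix (Fin 2) (Fin 2) T))
    (ma' : IsMono ((ua⁻¹ : (Matrix (Fin 2) (Fin 2) T)ˣ) : Matrix (Fin 2) (Fin 2) T))
    (mb' : IsMono ((ub⁻¹ : (Matrix (Fin 2) (Fin 2) T)ˣ) : Matrix (Fin 2) (Fin 2) T)) :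
    ∃ (ρ : P →* (Matrix (Fin 2) (Fin 2) T)ˣ)
      (Φ : MonoidAlgebra K P →ₐ[K] Matrix (Fin 2) (Fin 2) T),
      ρ pa = ua ∧ ρ pb = ub ∧ (∀ g, Φ (MonoidAlgebra.of K P g) = ρ g) ∧
      ∀ (c : K) (g : P), IsMono (Φ (MonoidAlgebra.single g c)) := by
  let fn : Fin 2 → (Matrix (Fin 2) (Fin 2) T)ˣ := ![ua, ub]
  let ρ : P →* (Matrix (Fin 2) (Fin 2) T)ˣ := PresentedGroup.toGroup (f := fn) (by
    intro r hr
    simp only [Prels, Set.mem_insert_iff, Set.mem_singleton_iff] at hr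
    rcases hr with rfl | rfl
    · simpa [fn] using h1
    · simpa [fn] using h2)
  have ra : ρ pa = ua := by simp [ρ, pa, fn]
  have rb : ρ pb = ub := by simp [ρ, pb, fn]
  refine ⟨ρ, MonoidAlgebra.lift K _ _ ((Units.coeHom _).comp ρ), ra, rb, ?_, ?_⟩
  · intro g
    simp
  · have mono : ∀ g : P, IsMono (ρ g : Matrix (Fin 2) (Fin 2) T) ∧
        IsMono ((ρ g)⁻¹ : (Matrix (Fin 2) (Fin 2) T)ˣ).1 := by
      intro g
      have hg : g ∈ Subgroup.closure (Set.range (PresentedGroup.of (rels := Prels))) := by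
        rw [PresentedGroup.closure_range_of]; trivial
      induction hg using Subgroup.closure_induction with
      | mem x hx =>
        obtain ⟨j, rfl⟩ := hx
        fin_cases j
        · change IsMono (ρ pa).1 ∧ IsMono (ρ pa)⁻¹.1
          rw [ra]; exact ⟨ma, ma'⟩
        · change IsMono (ρ pb).1 ∧ IsMono (ρ pb)⁻¹.1
          rw [rb]; exact ⟨mb, mb'⟩
      | one => simp [IsMono]
      | mul x y _ _ hx hy =>
        rw [map_mul, mul_inv_rev]
        exact ⟨hx.1.mul hy.1, hy.2.mul hx.2⟩
      | inv x _ hx =>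
        rw [map_inv, inv_inv]
        exact ⟨hx.2, hx.1⟩
    intro c g
    rw [MonoidAlgebra.lift_single]
    rcases (mono g).1 with ⟨e1, e2⟩ | ⟨e1, e2⟩
    · left; simp [e1, e2]
    · right; simp [e1, e2]

theorem P_rel1 : pb⁻¹ * pa ^ 2 * pb * pa ^ 2 = 1 := by
  have : (PresentedGroup.mk Prels) ((FreeGroup.of 1)⁻¹ * (FreeGroup.of 0) ^ 2 *
      (FreeGroup.of 1) * (FreeGroup.of 0) ^ 2) = 1 :=
    PresentedGroup.one_of_mem (by simp [Prels])
  simpa [pa, pb, PresentedGroup.of] using this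

theorem P_rel2 : pa⁻¹ * pb ^ 2 * pa * pb ^ 2 = 1 := by
  have : (PresentedGroup.mk Prels) ((FreeGroup.of 0)⁻¹ * (FreeGroup.of 1) ^ 2 *
      (FreeGroup.of 0) * (FreeGroup.of 1) ^ 2) = 1 :=
    PresentedGroup.one_of_mem (by simp [Prels])
  simpa [pa, pb, PresentedGroup.of] using this

section final
variable (K : Type u) [Field K]

theorem exists_s : ∃ s si : PowerSeries K, s = 1 + PowerSeries.X ∧ s * si = 1 ∧
    PowerSeries.constantCoeff s = 1 ∧ PowerSeries.constantCoeff si = 1 := by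
  have h : PowerSeries.constantCoeff (1 + PowerSeries.X : PowerSeries K) = 1 := by simp
  refine ⟨1 + PowerSeries.X, (1 + PowerSeries.X)⁻¹, rfl,
    PowerSeries.mul_inv_cancel _ (by rw [h]; exact one_ne_zero), h, ?_⟩
  rw [PowerSeries.constantCoeff_inv, h, inv_one]

theorem map_m0 {R R' : Type*} [Ring R] [Ring R'] (f : R →+* R') (a b x xi y yi zi : R) :
    f (m0 a b x xi y yi zi) = m0 (f a) (f b) (f x) (f xi) (f y) (f yi) (f zi) := by
  simp only [m0, cE, cX, map_mul, map_add, map_sub, map_one]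

theorem map_m1 {R R' : Type*} [Ring R] [Ring R'] (f : R →+* R') (a b x xi yi zi : R) :
    f (m1 a b x xi yi zi) = m1 (f a) (f b) (f x) (f xi) (f yi) (f zi) := by
  simp only [m1, cQ, cR, map_mul, map_add, map_sub, map_one]

theorem entry_char_two {T : Type*} [CommRing T] (h2 : (1 + 1 : T) = 0) (s si p q : T) :
    ((1 + 1 * m0 !![s, 0; 0, si] !![0, 1; 1, 0] !![p, 0; 0, q] !![q, 0; 0, p] 1 1 1 +
      1 * m1 !![s, 0; 0, si] !![0, 1; 1, 0] !![p, 0; 0, q] !![q, 0; 0, p] 1 1) : Matrix (Fin 2) (Fin 2) T) 0 1 = p + q ∧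
    ((1 + 1 * m0 !![s, 0; 0, si] !![0, 1; 1, 0] !![p, 0; 0, q] !![q, 0; 0, p] 1 1 1 +
      1 * m1 !![s, 0; 0, si] !![0, 1; 1, 0] !![p, 0; 0, q] !![q, 0; 0, p] 1 1) : Matrix (Fin 2) (Fin 2) T) 0 0 =
      1 + p + q := by
  constructor
  · simp only [m0, m1, cE, cX, cQ, cR, Matrix.one_fin_two, Matrix.mul_fin_two,
      Matrix.add_apply, Matrix.sub_apply, Matrix.mul_apply, Fin.sum_univ_two, Matrix.of_apply,
      Matrix.cons_val', Matrix.cons_val_zero, Matrix.cons_val_one, Matrix.cons_val_fin_one]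
    linear_combination (-(p + q) - 3 + 2 * (1 + q) * s) * h2
  · simp only [m0, m1, cE, cX, cQ, cR, Matrix.one_fin_two, Matrix.mul_fin_two,
      Matrix.add_apply, Matrix.sub_apply, Matrix.mul_apply, Fin.sum_univ_two, Matrix.of_apply,
      Matrix.cons_val', Matrix.cons_val_zero, Matrix.cons_val_one, Matrix.cons_val_fin_one]
    linear_combination (-(p + q) - 3 + 2 * (1 + q) * s) * h2

theorem entry_m1 {T : Type*} [CommRing T] (s si : T) :
    (m1 !![0, 1; 1, 0] !![0, si; s, 0] 1 1 1 !![si * si, 0; 0, s * s] :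
      Matrix (Fin 2) (Fin 2) T) 0 0 = 0 ∧
    (m1 !![0, 1; 1, 0] !![0, si; s, 0] 1 1 1 !![si * si, 0; 0, s * s] :
      Matrix (Fin 2) (Fin 2) T) 0 1 =
        6 * (si * si) + 2 * (si * si) ^ 2 - (6 * (si * si) + 2) * si := by
  constructor
  · simp only [m1, cQ, cR, Matrix.one_fin_two, Matrix.mul_fin_two,
      Matrix.add_apply, Matrix.sub_apply, Matrix.mul_apply, Fin.sum_univ_two, Matrix.of_apply,
      Matrix.cons_val', Matrix.cons_val_zero, Matrix.cons_val_one, Matrix.cons_val_fin_one]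
    ring
  · simp only [m1, cQ, cR, Matrix.one_fin_two, Matrix.mul_fin_two,
      Matrix.add_apply, Matrix.sub_apply, Matrix.mul_apply, Fin.sum_univ_two, Matrix.of_apply,
      Matrix.cons_val', Matrix.cons_val_zero, Matrix.cons_val_one, Matrix.cons_val_fin_one]
    ring

theorem diag_m0 {T : Type*} [CommRing T] (s si : T) :
    (m0 !![0, 1; 1, 0] !![0, si; s, 0] 1 1 1 1 !![si * si, 0; 0, s * s] :
      Matrix (Fin 2) (Fin 2) T) =
    Matrix.diagonalRingHom (Fin 2) T ![4 * (1 + si * si) * s - 8, 4 * (1 + s * s) * si - 8] := by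
  ext j k
  fin_cases j <;> fin_cases k <;>
  simp [m0, cE, cX, Matrix.one_fin_two] <;> ring

theorem diag_entry {T : Type*} [CommRing T] (v : Fin 2 → T) (M : Matrix (Fin 2) (Fin 2) T)
    (k : Fin 2) : (Matrix.diagonalRingHom (Fin 2) T v * M) 0 k = v 0 * M 0 k := by
  exact Matrix.diagonal_mul v M 0 k


/-- the entry `(0, 0)` and `(0, 1)` of the unit -/
theorem entry_general {T : Type*} [CommRing T] (j : T) (s si : T) :
    ((uA (Matrix.diagonalRingHom (Fin 2) T (fun _ => j))
        (!![s * s, 0; 0, si * si] : Matrix (Fin 2) (Fin 2) T) !![si * si, 0; 0, s * s]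
        (m0 !![0, 1; 1, 0] !![0, si; s, 0] 1 1 1 1 !![si * si, 0; 0, s * s]) +
      uB (Matrix.diagonalRingHom (Fin 2) T (fun _ => j))
        (!![s * s, 0; 0, si * si] : Matrix (Fin 2) (Fin 2) T) !![si * si, 0; 0, s * s]
        (m0 !![0, 1; 1, 0] !![0, si; s, 0] 1 1 1 1 !![si * si, 0; 0, s * s]) *
      m1 !![0, 1; 1, 0] !![0, si; s, 0] 1 1 1 !![si * si, 0; 0, s * s]) :
      Matrix (Fin 2) (Fin 2) T) 0 0 = uA j (s * s) (si * si) (4 * (1 + si * si) * s - 8) ∧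
    ((uA (Matrix.diagonalRingHom (Fin 2) T (fun _ => j))
        (!![s * s, 0; 0, si * si] : Matrix (Fin 2) (Fin 2) T) !![si * si, 0; 0, s * s]
        (m0 !![0, 1; 1, 0] !![0, si; s, 0] 1 1 1 1 !![si * si, 0; 0, s * s]) +
      uB (Matrix.diagonalRingHom (Fin 2) T (fun _ => j))
        (!![s * s, 0; 0, si * si] : Matrix (Fin 2) (Fin 2) T) !![si * si, 0; 0, s * s]
        (m0 !![0, 1; 1, 0] !![0, si; s, 0] 1 1 1 1 !![si * si, 0; 0, s * s]) *
      m1 !![0, 1; 1, 0] !![0, si; s, 0] 1 1 1 !![si * si, 0; 0, s * s]) :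
      Matrix (Fin 2) (Fin 2) T) 0 1 = uB j (s * s) (si * si) (4 * (1 + si * si) * s - 8) *
        (6 * (si * si) + 2 * (si * si) ^ 2 - (6 * (si * si) + 2) * si) := by
  have d : ∀ p q : T, (!![p, 0; 0, q] : Matrix (Fin 2) (Fin 2) T) =
      Matrix.diagonalRingHom (Fin 2) T ![p, q] := by
    intro p q
    ext k l
    fin_cases k <;> fin_cases l <;> simp
  obtain ⟨w0, w1⟩ := entry_m1 s si
  rw [diag_m0]
  generalize m1 !![0, 1; 1, 0] !![0, si; s, 0] 1 1 1
    (!![si * si, 0; 0, s * s] : Matrix (Fin 2) (Fin 2) T) = n at *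
  rw [d, d, ← map_uA, ← map_uB]
  have eA := map_uA (i := fun _ => j) (z := ![s * s, si * si]) (zi := ![si * si, s * s])
    (m := ![4 * (1 + si * si) * s - 8, 4 * (1 + s * s) * si - 8])
    (Pi.evalRingHom (fun _ : Fin 2 => T) 0)
  have eB := map_uB (i := fun _ => j) (z := ![s * s, si * si]) (zi := ![si * si, s * s])
    (m := ![4 * (1 + si * si) * s - 8, 4 * (1 + s * s) * si - 8])
    (Pi.evalRingHom (fun _ : Fin 2 => T) 0)
  simp only [Pi.evalRingHom_apply, Matrix.cons_val_zero] at eA eB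
  rw [Matrix.add_apply, Matrix.add_apply, diag_entry, diag_entry, w0, w1, eB, mul_zero, add_zero]
  constructor
  · exact (Matrix.diagonal_apply_eq _ _).trans eA
  · rw [add_eq_right]
    exact Matrix.diagonal_apply_ne _ (by decide)

theorem coeff_general {K : Type*} [Field K] (h2 : (2 : K) ≠ 0) (i : K) (hi : i ≠ 0)
    (s si : PowerSeries K) (hs : s = 1 + PowerSeries.X) (hsi : s * si = 1)
    (cs : PowerSeries.constantCoeff s = 1) (csi : PowerSeries.constantCoeff si = 1) :
    uA (PowerSeries.C i) (s * s) (si * si) (4 * (1 + si * si) * s - 8) ≠ 0 ∧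
    uB (PowerSeries.C i) (s * s) (si * si) (4 * (1 + si * si) * s - 8) *
        (6 * (si * si) + 2 * (si * si) ^ 2 - (6 * (si * si) + 2) * si) ≠ 0 := by
  have h2' : (1 + 1 : K) ≠ 0 := by rwa [one_add_one_eq_two]
  have nz : ∀ p : PowerSeries K, PowerSeries.constantCoeff p ≠ 0 → p ≠ 0 := by
    rintro p hp rfl
    exact hp (map_zero _)
  have hs0 : s ≠ 0 := nz s (by rw [cs]; exact one_ne_zero)
  have hsi0 : si ≠ 0 := nz si (by rw [csi]; exact one_ne_zero)
  have h20 : (2 : PowerSeries K) ≠ 0 := nz _ (by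
    rw [← one_add_one_eq_two, map_add, map_one]; exact h2')
  have X0 : (PowerSeries.X : PowerSeries K) ≠ 0 := PowerSeries.X_ne_zero
  have ed : s * s - si * si = si * si * (PowerSeries.X *
      (4 + 6 * PowerSeries.X + 4 * PowerSeries.X ^ 2 + PowerSeries.X ^ 3)) := by
    have e4 : s ^ 4 - 1 = PowerSeries.X *
      (4 + 6 * PowerSeries.X + 4 * PowerSeries.X ^ 2 + PowerSeries.X ^ 3) := by rw [hs]; ring
    rw [← e4]
    linear_combination (-(s * s) * (s * si + 1)) * hsi
  have em : 6 * (si * si) + 2 * (si * si) ^ 2 - (6 * (si * si) + 2) * si =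
      -(2 * si ^ 4 * PowerSeries.X ^ 3) := by
    have eX : (PowerSeries.X : PowerSeries K) = s - 1 := by rw [hs]; ring
    rw [eX]
    linear_combination (2 * si * (s ^ 2 * si ^ 2 + s * si + 1) - 6 * si ^ 2 * (s * si + 1)
      + 6 * si ^ 3) * hsi
  have er : ur (PowerSeries.C i) (s * s) (si * si) ≠ 0 := by
    unfold ur
    refine mul_ne_zero (mul_ne_zero (mul_ne_zero ?_ ?_) ?_) ?_
    · rwa [one_add_one_eq_two]
    · exact nz _ (by simpa using hi)
    · rw [ed]
      refine mul_ne_zero (mul_ne_zero hsi0 hsi0) (mul_ne_zero X0 (nz _ ?_))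
      have : (4 : K) ≠ 0 := by
        rw [show (4 : K) = 2 * 2 by norm_num]; exact mul_ne_zero h2 h2
      have h4 : (PowerSeries.constantCoeff (4 : PowerSeries K)) = 4 := by
        rw [show (4 : PowerSeries K) = 1 + 1 + 1 + 1 by norm_num]
        simp only [map_add, map_one]; norm_num
      simpa [h4] using this
    · apply nz
      simp only [map_add, map_mul, cs, csi, map_one, mul_one]
      rw [show (1 + 1 + (1 + 1) : K) = 2 * 2 by norm_num]; exact mul_ne_zero h2 h2
  have cr : PowerSeries.constantCoeff (ur (PowerSeries.C i) (s * s) (si * si)) = 0 := by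
    simp only [ur, map_add, map_sub, map_mul, cs, csi, map_one, mul_one, sub_self, mul_zero,
      zero_mul]
  constructor
  · apply nz
    unfold uA
    rw [map_sub, map_mul, map_mul, map_pow _ (ur _ _ _), cr]
    simp
  · rw [em]
    refine mul_ne_zero ?_ (neg_ne_zero.2 (mul_ne_zero (mul_ne_zero h20 (pow_ne_zero _ hsi0))
      (pow_ne_zero _ X0)))
    unfold uB
    refine neg_ne_zero.2 (mul_ne_zero (mul_ne_zero (mul_ne_zero ?_ ?_) er) ?_)
    · exact pow_ne_zero _ (mul_ne_zero hs0 hs0)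
    · apply nz
      simp only [uq, map_add, map_sub, map_mul, map_pow, cs, csi, map_one, mul_one, one_pow]
      norm_num
      exact h2
    · apply nz
      rw [map_add, map_mul, cr]
      simp [ug, cs, csi]

/-- Characteristic two. -/
theorem nontrivial_char_two (h2 : (1 + 1 : K) = 0) :
    ∃ u : (MonoidAlgebra K P)ˣ,
      ¬∃ (c : Kˣ) (g : P), (u : MonoidAlgebra K P) = MonoidAlgebra.single g (c : K) := by
  have hP := PRel.of_group (MonoidAlgebra.of K P) pa pb P_rel1 P_rel2
  obtain ⟨mz, nz, nzi, nm, nn⟩ := hP.main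
  have h2R : (1 + 1 : MonoidAlgebra K P) = 0 := by
    have := congrArg (algebraMap K (MonoidAlgebra K P)) h2
    simpa only [map_add, map_one, map_zero] using this
  obtain ⟨u1, u2⟩ := unit_char_two _ _ _ _ h2R hP.zz hP.zz' mz nz nzi nm nn
  refine ⟨⟨_, _, u1, u2⟩, ?_⟩
  rintro ⟨c, g, hcg⟩
  simp only at hcg
  obtain ⟨s, si, hs, hsi, cs, csi⟩ := exists_s K
  have hsi' : si * s = 1 := by rw [mul_comm, hsi]
  let ua : (Matrix (Fin 2) (Fin 2) (PowerSeries K))ˣ :=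
    ⟨!![s, 0; 0, si], !![si, 0; 0, s], by simp [Matrix.one_fin_two, hsi, hsi'],
      by simp [Matrix.one_fin_two, hsi, hsi']⟩
  let ub : (Matrix (Fin 2) (Fin 2) (PowerSeries K))ˣ :=
    ⟨!![0, 1; 1, 0], !![0, 1; 1, 0], by simp [Matrix.one_fin_two],
      by simp [Matrix.one_fin_two]⟩
  have hb2 : ub ^ 2 = 1 := by
    ext1; simp [ub, pow_two, Matrix.one_fin_two]
  have ha2 : ((ua ^ 2 : (Matrix (Fin 2) (Fin 2) (PowerSeries K))ˣ) :
      Matrix (Fin 2) (Fin 2) (PowerSeries K)) = !![s * s, 0; 0, si * si] := by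
    simp [ua, pow_two]
  have ha2' : (((ua ^ 2)⁻¹ : (Matrix (Fin 2) (Fin 2) (PowerSeries K))ˣ) :
      Matrix (Fin 2) (Fin 2) (PowerSeries K)) = !![si * si, 0; 0, s * s] := by
    rw [pow_two, mul_inv_rev, Units.val_mul]; simp [ua]
  have hc2 : (ua * ub) ^ 2 = 1 := by
    ext1; simp [ua, ub, pow_two, Matrix.one_fin_two, hsi, hsi']
  have hss : s * s * (si * si) = 1 := by linear_combination (s * si + 1) * hsi
  have hss' : si * si * (s * s) = 1 := by linear_combination (s * si + 1) * hsi
  obtain ⟨ρ, Φ, ra, rb, hΦ, hmono⟩ := exists_rep (K := K) ua ub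
    (by
      ext1
      rw [Units.val_mul, Units.val_mul, Units.val_mul, ha2]
      simp [ub, Matrix.one_fin_two, hss, hss'])
    (by rw [hb2]; simp) (by simp [IsMono, ua]) (by simp [IsMono, ub]) (by simp [IsMono, ua])
    (by simp [IsMono, ub])
  have hM := hmono c g
  rw [← hcg] at hM
  have h2T : (1 + 1 : PowerSeries K) = 0 := by
    have := congrArg (algebraMap K (PowerSeries K)) h2
    simpa only [map_add, map_one, map_zero] using this
  have e := map_m0 (Φ : MonoidAlgebra K P →+* Matrix (Fin 2) (Fin 2) (PowerSeries K))
  have e' := map_m1 (Φ : MonoidAlgebra K P →+* Matrix (Fin 2) (Fin 2) (PowerSeries K))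
  simp only [RingHom.coe_coe] at e e'
  rw [map_add, map_add, map_mul, map_mul, map_one, e, e'] at hM
  simp only [hΦ, map_inv, map_pow, map_mul, ra, rb, hb2, hc2, inv_one, Units.val_one,
    ha2'] at hM
  have hb2v : (ub : Matrix (Fin 2) (Fin 2) (PowerSeries K)) ^ 2 = 1 := by
    rw [← Units.val_pow_eq_pow_val, hb2, Units.val_one]
  have ha2v : (ua : Matrix (Fin 2) (Fin 2) (PowerSeries K)) ^ 2 = !![s * s, 0; 0, si * si] := by
    rw [← Units.val_pow_eq_pow_val, ha2]
  have hc2v : ((ua : Matrix (Fin 2) (Fin 2) (PowerSeries K)) * ub.val) ^ 2 = 1 := by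
    rw [← Units.val_mul, ← Units.val_pow_eq_pow_val, hc2, Units.val_one]
  simp only [ha2v, hb2v, hc2v] at hM
  have c0 : PowerSeries.constantCoeff (1 + s * s + si * si) ≠ 0 := by
    simp only [map_add, map_mul, cs, csi, map_one, mul_one, h2, zero_add]
    exact one_ne_zero
  have hM' := hM
  change IsMono (1 + 1 * m0 !![s, 0; 0, si] !![0, 1; 1, 0] !![s * s, 0; 0, si * si]
      !![si * si, 0; 0, s * s] 1 1 1 +
    1 * m1 !![s, 0; 0, si] !![0, 1; 1, 0] !![s * s, 0; 0, si * si]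
      !![si * si, 0; 0, s * s] 1 1) at hM'
  obtain ⟨e01, e00⟩ := entry_char_two h2T s si (s * s) (si * si)
  rcases hM' with ⟨h, -⟩ | ⟨h, -⟩
  · have h' : s * s + si * si = 0 := e01.symm.trans h
    have h'' : (PowerSeries.X : PowerSeries K) ^ 4 = 0 := by
      have e4 : s ^ 4 = 1 + PowerSeries.X ^ 4 := by
        rw [hs]
        linear_combination (2 * PowerSeries.X + 3 * PowerSeries.X ^ 2 +
          2 * PowerSeries.X ^ 3) * h2T
      linear_combination s ^ 2 * h' - e4 - (s * si + 1) * hsi - h2T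
    exact pow_ne_zero 4 PowerSeries.X_ne_zero h''
  · apply c0
    rw [e00.symm.trans h, map_zero]

/-- Characteristic different from two. -/
theorem nontrivial_general (h2 : (2 : K) ≠ 0) (i : K) (hi : i * i = -1) :
    ∃ u : (MonoidAlgebra K P)ˣ,
      ¬∃ (c : Kˣ) (g : P), (u : MonoidAlgebra K P) = MonoidAlgebra.single g (c : K) := by
  have hP := PRel.of_group (MonoidAlgebra.of K P) pa pb P_rel1 P_rel2
  obtain ⟨mz, nz, nzi, nm, nn⟩ := hP.main
  have hi0 : i ≠ 0 := by
    rintro rfl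
    simp at hi
  have hiR : algebraMap K (MonoidAlgebra K P) i * algebraMap K (MonoidAlgebra K P) i = -1 := by
    rw [← map_mul, hi, map_neg, map_one]
  obtain ⟨u1, u2⟩ := unit_general (algebraMap K (MonoidAlgebra K P) i) _ _ _ _ hiR
    (Algebra.commutes i _) (Algebra.commutes i _) (Algebra.commutes i _)
    (Algebra.commutes i _).symm hP.zz hP.zz' mz nz nzi nm nn
  refine ⟨⟨_, _, u1, u2⟩, ?_⟩
  rintro ⟨c, g, hcg⟩
  simp only at hcg
  obtain ⟨s, si, hs, hsi, cs, csi⟩ := exists_s K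
  have hsi' : si * s = 1 := by rw [mul_comm, hsi]
  let ua : (Matrix (Fin 2) (Fin 2) (PowerSeries K))ˣ :=
    ⟨!![0, 1; 1, 0], !![0, 1; 1, 0], by simp [Matrix.one_fin_two],
      by simp [Matrix.one_fin_two]⟩
  let ub : (Matrix (Fin 2) (Fin 2) (PowerSeries K))ˣ :=
    ⟨!![0, si; s, 0], !![0, si; s, 0], by simp [Matrix.one_fin_two, hsi, hsi'],
      by simp [Matrix.one_fin_two, hsi, hsi']⟩
  have ha2 : ua ^ 2 = 1 := by
    ext1; simp [ua, pow_two, Matrix.one_fin_two]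
  have hb2 : ub ^ 2 = 1 := by
    ext1; simp [ub, pow_two, Matrix.one_fin_two, hsi, hsi']
  have hc2 : (((ua * ub) ^ 2 : (Matrix (Fin 2) (Fin 2) (PowerSeries K))ˣ) :
      Matrix (Fin 2) (Fin 2) (PowerSeries K)) = !![s * s, 0; 0, si * si] := by
    simp [ua, ub, pow_two]
  have hc2' : ((((ua * ub) ^ 2)⁻¹ : (Matrix (Fin 2) (Fin 2) (PowerSeries K))ˣ) :
      Matrix (Fin 2) (Fin 2) (PowerSeries K)) = !![si * si, 0; 0, s * s] := by
    rw [pow_two, mul_inv_rev, Units.val_mul, mul_inv_rev, Units.val_mul]; simp [ua, ub]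
  obtain ⟨ρ, Φ, ra, rb, hΦ, hmono⟩ := exists_rep (K := K) ua ub
    (by rw [ha2]; simp) (by rw [hb2]; simp)
    (by simp [IsMono, ua]) (by simp [IsMono, ub]) (by simp [IsMono, ua])
    (by simp [IsMono, ub])
  have hM := hmono c g
  rw [← hcg] at hM
  have e := map_m0 (Φ : MonoidAlgebra K P →+* Matrix (Fin 2) (Fin 2) (PowerSeries K))
  have e' := map_m1 (Φ : MonoidAlgebra K P →+* Matrix (Fin 2) (Fin 2) (PowerSeries K))
  have eA := fun i z zi m => map_uA (i := i) (z := z) (zi := zi) (m := m)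
    (Φ : MonoidAlgebra K P →+* Matrix (Fin 2) (Fin 2) (PowerSeries K))
  have eB := fun i z zi m => map_uB (i := i) (z := z) (zi := zi) (m := m)
    (Φ : MonoidAlgebra K P →+* Matrix (Fin 2) (Fin 2) (PowerSeries K))
  simp only [RingHom.coe_coe] at e e' eA eB
  have ei : Φ (algebraMap K (MonoidAlgebra K P) i) =
      Matrix.diagonalRingHom (Fin 2) (PowerSeries K) (fun _ => PowerSeries.C i) := by
    rw [AlgHom.commutes]; rfl
  have v1 : Φ (MonoidAlgebra.of K P (pa ^ 2)) = 1 := by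
    rw [hΦ, map_pow, ra, ha2, Units.val_one]
  have v2 : Φ (MonoidAlgebra.of K P (pa ^ 2)⁻¹) = 1 := by
    rw [hΦ, map_inv, map_pow, ra, ha2, inv_one, Units.val_one]
  have v3 : Φ (MonoidAlgebra.of K P (pb ^ 2)) = 1 := by
    rw [hΦ, map_pow, rb, hb2, Units.val_one]
  have v4 : Φ (MonoidAlgebra.of K P (pb ^ 2)⁻¹) = 1 := by
    rw [hΦ, map_inv, map_pow, rb, hb2, inv_one, Units.val_one]
  have v5 : Φ (MonoidAlgebra.of K P ((pa * pb) ^ 2)) = !![s * s, 0; 0, si * si] := by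
    rw [hΦ, map_pow, map_mul, ra, rb, hc2]
  have v6 : Φ (MonoidAlgebra.of K P ((pa * pb) ^ 2)⁻¹) = !![si * si, 0; 0, s * s] := by
    rw [hΦ, map_inv, map_pow, map_mul, ra, rb, hc2']
  have v7 : Φ (MonoidAlgebra.of K P pa) = !![0, 1; 1, 0] := by rw [hΦ, ra]
  have v8 : Φ (MonoidAlgebra.of K P pb) = !![0, si; s, 0] := by rw [hΦ, rb]
  rw [map_add, map_mul, eA, eB, e, e', ei, v1, v2, v3, v4, v5, v6, v7, v8] at hM
  obtain ⟨e00, e01⟩ := entry_general (PowerSeries.C i) s si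
  obtain ⟨n00, n01⟩ := coeff_general h2 i hi0 s si hs hsi cs csi
  rcases hM with ⟨h, -⟩ | ⟨h, -⟩
  · exact n01 (e01.symm.trans h)
  · exact n00 (e00.symm.trans h)

end final

/-- If `K` is a field containing an element `ζ` with `ζ⁴ = −1`, then the group ring
`K[P]` contains a unit that is not a trivial unit. -/
theorem group_ring_has_nontrivial_unit_of_root (K : Type*) [Field K] (ζ : K)
    (hζ : ζ ^ 4 = -1) :
    ∃ u : (MonoidAlgebra K P)ˣ,
      ¬∃ (c : Kˣ) (g : P), (u : MonoidAlgebra K P) = MonoidAlgebra.single g (c : K) := by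
  by_cases h2 : (1 + 1 : K) = 0
  · exact nontrivial_char_two K h2
  · refine nontrivial_general K (by rwa [one_add_one_eq_two] at h2) (ζ ^ 2) ?_
    rw [← hζ]; ring
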